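/- Lipschitz estimate in a higher-moment norm: let M, M' > 0 and N ≥ 0, and let V_M be a set of nonnegative functions in L¹(ℝ^d) ∩ L¹_{N+2}(ℝ^d) whose L¹_{N+2}-norms are bounded above by M and whose L¹-norms are bounded below by M'. Then there exists a constant C_{M,M'} > 0 such that for all g, h ∈ V_M, ‖Q[g] − Q[h]‖_{L¹_N} ≤ C_{M,M'} · ‖g − h‖_{L¹_{N+1}}. -/

import Mathlib

noncomputable section
open MeasureTheory Filter Set Real

abbrev Sp (d : ℕ) : Type := EuclideanSpace ℝ (Fin d)

/-- Dispersion relation ω_k = √(λ1 + λ2 |k|²). -/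
def omg (l1 l2 : ℝ) {d : ℕ} (k : Sp d) : ℝ := Real.sqrt (l1 + l2 * ‖k‖ ^ 2)

/-- Zeroth moment 𝔐₀[f] = ∫ f. -/
def M0 {d : ℕ} (f : Sp d → ℝ) : ℝ := ∫ k, f k

/-- Resonance broadening Γ_{k,k1,k2}[f]. -/
def Gam {d : ℕ} (f : Sp d → ℝ) (k k1 k2 : Sp d) : ℝ :=
  (‖k‖ ^ 2 + ‖k1‖ ^ 2 + ‖k2‖ ^ 2) * M0 f

/-- Lorentzian L_f(ζ; k,k1,k2) = Γ/(ζ² + Γ²). -/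
def Lor {d : ℕ} (f : Sp d → ℝ) (z : ℝ) (k k1 k2 : Sp d) : ℝ :=
  Gam f k k1 k2 / (z ^ 2 + Gam f k k1 k2 ^ 2)

/-- Collision kernel |V_{k,k1,k2}|² = |k||k1||k2|. -/
def Vsq {d : ℕ} (k k1 k2 : Sp d) : ℝ := ‖k‖ * ‖k1‖ * ‖k2‖

/-- Collision operator Q[f] after eliminating the Dirac delta enforcing k = k1 + k2. -/
def Qop (l1 l2 : ℝ) {d : ℕ} (f : Sp d → ℝ) (k : Sp d) : ℝ :=
  (∫ k1, Vsq k k1 (k - k1) *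
      Lor f (omg l1 l2 k - omg l1 l2 k1 - omg l1 l2 (k - k1)) k k1 (k - k1) *
      (f k1 * f (k - k1) - f k * f k1 - f k * f (k - k1)))
  - 2 * ∫ k2, Vsq (k + k2) k k2 *
      Lor f (omg l1 l2 (k + k2) - omg l1 l2 k - omg l1 l2 k2) (k + k2) k k2 *
      (f k * f k2 - f k * f (k + k2) - f (k + k2) * f k2)

/-- Weighted L¹ norm ‖g‖_{L¹_N} = ∫ |g| ω^N. -/
def wnorm (l1 l2 N : ℝ) {d : ℕ} (g : Sp d → ℝ) : ℝ := ∫ k, |g k| * omg l1 l2 k ^ N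

/-- N-th moment 𝔐_N[g] = ∫ ω^N g. -/
def Mom (l1 l2 N : ℝ) {d : ℕ} (g : Sp d → ℝ) : ℝ := ∫ k, omg l1 l2 k ^ N * g k

/-! The resonance kernel `|V|² L_f` is symmetric in the three wave numbers of a triad, so the
variable `k` of `Q[f](k)` can always be given the leading role. As
`|V|² ≤ |k| (|k|² + |k1|² + |k2|²)` and `L_f(ζ) = Re 1/(Γ + iζ)`, the kernel is at most
`|k| / 𝔐₀[f]`, and between densities `g` and `h` it varies by at most
`|k| |𝔐₀[g] - 𝔐₀[h]| / (𝔐₀[g] 𝔐₀[h])`, uniformly in the resonance defect `ζ`.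

Every product `f(p) f(q)` in the collision integrands has `|k| ≤ |p| + |q|`, whence
`|k| ω_k^N ≤ c ω_p^(N+1) ω_q^(N+1)`, and `(k, x) ↦ (p, q)` preserves Lebesgue measure. So each
term is dominated in the weighted space by `‖f‖²`, the norm being that of `L¹_{N+1}`, and a
difference of two such terms has one factor `‖g - h‖`. -/

section L1Bounded

variable {α β : Type*} [MeasurableSpace α] [MeasurableSpace β] {μ : Measure α} {ν : Measure β}
  {F G : α → ℝ} {C D : ℝ}

/-- `L1Bounded F μ C` says that `F` lies in the closed ball of radius `C` of `L¹(μ)`. Integrability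
is part of the notion, since the Bochner integral of a non-integrable function is `0`. -/
structure L1Bounded (F : α → ℝ) (μ : Measure α) (C : ℝ) : Prop where
  integrable : Integrable F μ
  integral_abs_le : ∫ x, |F x| ∂μ ≤ C

/-- The tensor product `(u ⊗ v)(p, q) = u(p) v(q)` of two real functions. -/
def tensorProd (u : α → ℝ) (v : β → ℝ) (p : α × β) : ℝ := u p.1 * v p.2

namespace L1Bounded

lemma bound_nonneg (hF : L1Bounded F μ C) : 0 ≤ C :=
  (integral_nonneg fun _ => abs_nonneg _).trans hF.integral_abs_le

lemma mono (hF : L1Bounded F μ C) (hCD : C ≤ D) : L1Bounded F μ D :=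
  ⟨hF.integrable, hF.integral_abs_le.trans hCD⟩

lemma congr (hF : L1Bounded F μ C) (hFG : F =ᵐ[μ] G) : L1Bounded G μ C where
  integrable := hF.integrable.congr hFG
  integral_abs_le :=
    (integral_congr_ae (hFG.fun_comp abs)).symm.trans_le hF.integral_abs_le

lemma add (hF : L1Bounded F μ C) (hG : L1Bounded G μ D) :
    L1Bounded (fun x => F x + G x) μ (C + D) where
  integrable := hF.integrable.add hG.integrable
  integral_abs_le := calc
    ∫ x, |F x + G x| ∂μ ≤ ∫ x, (|F x| + |G x|) ∂μ :=
      integral_mono (hF.integrable.add hG.integrable).abs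
        (hF.integrable.abs.add hG.integrable.abs) fun _ => abs_add_le _ _
    _ = ∫ x, |F x| ∂μ + ∫ x, |G x| ∂μ := integral_add hF.integrable.abs hG.integrable.abs
    _ ≤ C + D := add_le_add hF.integral_abs_le hG.integral_abs_le

lemma bdd_mul {K : α → ℝ} {c : ℝ} (hF : L1Bounded F μ C) (hK : AEStronglyMeasurable K μ)
    (hc : 0 ≤ c) (hKc : ∀ x, |K x| ≤ c) : L1Bounded (fun x => K x * F x) μ (c * C) where
  integrable := hF.integrable.bdd_mul hK (ae_of_all _ hKc)
  integral_abs_le := calc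
    ∫ x, |K x * F x| ∂μ ≤ ∫ x, c * |F x| ∂μ :=
      integral_mono (hF.integrable.bdd_mul hK (ae_of_all _ hKc)).abs
        (hF.integrable.abs.const_mul c) fun x => by
          rw [abs_mul]; exact mul_le_mul_of_nonneg_right (hKc x) (abs_nonneg _)
    _ = c * ∫ x, |F x| ∂μ := integral_const_mul _ _
    _ ≤ c * C := mul_le_mul_of_nonneg_left hF.integral_abs_le hc

lemma const_mul (c : ℝ) (hF : L1Bounded F μ C) : L1Bounded (fun x => c * F x) μ (|c| * C) :=
  hF.bdd_mul aestronglyMeasurable_const (abs_nonneg c) fun _ => le_rfl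

lemma sub (hF : L1Bounded F μ C) (hG : L1Bounded G μ D) :
    L1Bounded (fun x => F x - G x) μ (C + D) := by
  simpa [sub_eq_add_neg] using hF.add (hG.const_mul (-1))

lemma comp {T : β → α} (hF : L1Bounded F μ C) (hT : MeasurePreserving T ν μ) :
    L1Bounded (fun y => F (T y)) ν C where
  integrable := hT.integrable_comp_of_integrable hF.integrable
  integral_abs_le := by
    have hF_abs : AEStronglyMeasurable (fun x => |F x|) (ν.map T) :=
      hT.map_eq ▸ hF.integrable.abs.aestronglyMeasurable
    rw [← integral_map hT.aemeasurable hF_abs, hT.map_eq]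
    exact hF.integral_abs_le

lemma tensorProd [SFinite μ] [SFinite ν] {H : β → ℝ} (hF : L1Bounded F μ C)
    (hH : L1Bounded H ν D) : L1Bounded (tensorProd F H) (μ.prod ν) (C * D) where
  integrable := hF.integrable.mul_prod hH.integrable
  integral_abs_le := by
    simp only [_root_.tensorProd, abs_mul]
    rw [integral_prod_mul (fun x => |F x|) (fun y => |H y|)]
    exact mul_le_mul hF.integral_abs_le hH.integral_abs_le
      (integral_nonneg fun _ => abs_nonneg _) hF.bound_nonneg

lemma integral_prod [SFinite μ] [SFinite ν] {F : α × β → ℝ}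
    (hF : L1Bounded F (μ.prod ν) C) : L1Bounded (fun x => ∫ y, F (x, y) ∂ν) μ C where
  integrable := hF.integrable.integral_prod_left
  integral_abs_le := calc
    ∫ x, |∫ y, F (x, y) ∂ν| ∂μ ≤ ∫ x, ∫ y, |F (x, y)| ∂ν ∂μ :=
      integral_mono hF.integrable.integral_prod_left.abs hF.integrable.abs.integral_prod_left
        fun _ => abs_integral_le_integral_abs
    _ = ∫ z, |F z| ∂μ.prod ν := (MeasureTheory.integral_prod _ hF.integrable.abs).symm
    _ ≤ C := hF.integral_abs_le

lemma integral_sub_mul [SFinite μ] [SFinite ν] {F G : α × β → ℝ} {w : α → ℝ}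
    (hw : ∀ x, w x ≠ 0) (hF : Integrable (fun z => F z * w z.1) (μ.prod ν))
    (hG : Integrable (fun z => G z * w z.1) (μ.prod ν))
    (hFG : L1Bounded (fun z => (F z - G z) * w z.1) (μ.prod ν) C) :
    L1Bounded (fun x => ((∫ y, F (x, y) ∂ν) - ∫ y, G (x, y) ∂ν) * w x) μ C := by
  refine hFG.integral_prod.congr ?_
  filter_upwards [hF.prod_right_ae, hG.prod_right_ae] with x hFx hGx
  rw [integrable_mul_const_iff (hw x).isUnit] at hFx hGx
  rw [integral_mul_const, integral_sub hFx hGx]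

end L1Bounded

end L1Bounded

section Lorentzian

-- With `w a = a + iz`, the Lorentzian is `Re (1 / w a)`, and `1 / w a - 1 / w b` has modulus
-- `|a - b| / (|w a| |w b|)`, where `|w a| ≥ |a|`.
lemma abs_lorentzian_sub_le {a b : ℝ} (ha : a ≠ 0) (hb : b ≠ 0) (z : ℝ) :
    |a / (z ^ 2 + a ^ 2) - b / (z ^ 2 + b ^ 2)| ≤ |a - b| / (|a| * |b|) := by
  set w : ℝ → ℂ := fun x => ⟨x, z⟩
  have re_inv_w (x : ℝ) : (w x)⁻¹.re = x / (z ^ 2 + x ^ 2) := by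
    rw [Complex.inv_re, Complex.normSq_mk]; ring
  have abs_le_norm_w (x : ℝ) : |x| ≤ ‖w x‖ := Complex.abs_re_le_norm (w x)
  have w_ne_zero {x : ℝ} (hx : x ≠ 0) : w x ≠ 0 := fun h => hx (congrArg Complex.re h)
  have w_sub : w b - w a = ((b - a : ℝ) : ℂ) := by apply Complex.ext <;> simp [w]
  calc |a / (z ^ 2 + a ^ 2) - b / (z ^ 2 + b ^ 2)|
      = |((w a)⁻¹ - (w b)⁻¹).re| := by rw [Complex.sub_re, re_inv_w, re_inv_w]
    _ ≤ ‖(w a)⁻¹ - (w b)⁻¹‖ := Complex.abs_re_le_norm _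
    _ = |a - b| / (‖w a‖ * ‖w b‖) := by
      rw [inv_sub_inv (w_ne_zero ha) (w_ne_zero hb), w_sub, norm_div, norm_mul,
        Complex.norm_real, Real.norm_eq_abs, abs_sub_comm]
    _ ≤ |a - b| / (|a| * |b|) := by
      gcongr
      exacts [abs_le_norm_w a, abs_le_norm_w b]

lemma abs_lorentzian_le (a z : ℝ) : |a / (z ^ 2 + a ^ 2)| ≤ |a|⁻¹ := by
  rcases eq_or_ne a 0 with rfl | ha
  · simp
  rw [abs_div, abs_of_pos (by positivity : 0 < z ^ 2 + a ^ 2), ← one_div,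
    div_le_div_iff₀ (by positivity) (by positivity), abs_mul_abs_self]
  nlinarith [sq_nonneg z]

end Lorentzian

section TriadKernel

variable {d : ℕ}

/-- The weighted resonance kernel `|V_{k,k1,k2}|² L_f(z; k,k1,k2)` of the collision operator. -/
def triadKernel (f : Sp d → ℝ) (z : ℝ) (k k1 k2 : Sp d) : ℝ := Vsq k k1 k2 * Lor f z k k1 k2

lemma triadKernel_swap (f : Sp d → ℝ) (z : ℝ) (k k1 k2 : Sp d) :
    triadKernel f z k k1 k2 = triadKernel f z k1 k k2 := by
  simp only [triadKernel, Vsq, Lor, Gam, mul_comm ‖k‖, add_comm (‖k‖ ^ 2)]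

lemma Vsq_le (k k1 k2 : Sp d) : Vsq k k1 k2 ≤ ‖k‖ * (‖k‖ ^ 2 + ‖k1‖ ^ 2 + ‖k2‖ ^ 2) := by
  rw [Vsq, mul_assoc]
  gcongr
  nlinarith [sq_nonneg (‖k1‖ - ‖k2‖), sq_nonneg ‖k‖]

lemma abs_Vsq_mul_le {k k1 k2 : Sp d} {L B : ℝ} (hB : 0 ≤ B)
    (hL : 0 < ‖k‖ ^ 2 + ‖k1‖ ^ 2 + ‖k2‖ ^ 2 → (‖k‖ ^ 2 + ‖k1‖ ^ 2 + ‖k2‖ ^ 2) * |L| ≤ B) :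
    |Vsq k k1 k2 * L| ≤ B * ‖k‖ := by
  have hV : 0 ≤ Vsq k k1 k2 := by unfold Vsq; positivity
  have hVle := Vsq_le k k1 k2
  set S := ‖k‖ ^ 2 + ‖k1‖ ^ 2 + ‖k2‖ ^ 2
  have hSL : S * |L| ≤ B := by
    rcases (by positivity : 0 ≤ S).eq_or_lt with h0 | hpos
    · rwa [← h0, zero_mul]
    · exact hL hpos
  calc |Vsq k k1 k2 * L| = Vsq k k1 k2 * |L| := by rw [abs_mul, abs_of_nonneg hV]
    _ ≤ ‖k‖ * S * |L| := by gcongr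
    _ = S * |L| * ‖k‖ := by ring
    _ ≤ B * ‖k‖ := by gcongr

lemma abs_triadKernel_le {f : Sp d → ℝ} {m : ℝ} (hm : 0 < m) (hf : m ≤ |M0 f|) (z : ℝ)
    (k k1 k2 : Sp d) : |triadKernel f z k k1 k2| ≤ m⁻¹ * ‖k‖ := by
  refine abs_Vsq_mul_le (by positivity) fun hS => ?_
  unfold Lor Gam
  set S := ‖k‖ ^ 2 + ‖k1‖ ^ 2 + ‖k2‖ ^ 2
  calc S * |S * M0 f / (z ^ 2 + (S * M0 f) ^ 2)| ≤ S * |S * M0 f|⁻¹ := by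
        gcongr; exact abs_lorentzian_le _ _
    _ = |M0 f|⁻¹ := by rw [abs_mul, abs_of_pos hS]; field_simp
    _ ≤ m⁻¹ := by gcongr

lemma abs_triadKernel_sub_le {f g : Sp d → ℝ} {m : ℝ} (hm : 0 < m) (hf : m ≤ |M0 f|)
    (hg : m ≤ |M0 g|) (z : ℝ) (k k1 k2 : Sp d) :
    |triadKernel f z k k1 k2 - triadKernel g z k k1 k2| ≤ |M0 f - M0 g| / m ^ 2 * ‖k‖ := by
  have hf0 : M0 f ≠ 0 := abs_pos.mp (hm.trans_le hf)
  have hg0 : M0 g ≠ 0 := abs_pos.mp (hm.trans_le hg)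
  unfold triadKernel
  rw [← mul_sub]
  refine abs_Vsq_mul_le (by positivity) fun hS => ?_
  unfold Lor Gam
  set S := ‖k‖ ^ 2 + ‖k1‖ ^ 2 + ‖k2‖ ^ 2
  calc S * |S * M0 f / (z ^ 2 + (S * M0 f) ^ 2) - S * M0 g / (z ^ 2 + (S * M0 g) ^ 2)|
      ≤ S * (|S * M0 f - S * M0 g| / (|S * M0 f| * |S * M0 g|)) := by
        gcongr
        exact abs_lorentzian_sub_le (mul_ne_zero hS.ne' hf0) (mul_ne_zero hS.ne' hg0) z
    _ = |M0 f - M0 g| / (|M0 f| * |M0 g|) := by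
        rw [← mul_sub, abs_mul, abs_mul, abs_mul, abs_of_pos hS]; field_simp
    _ ≤ |M0 f - M0 g| / m ^ 2 := by rw [sq]; gcongr

end TriadKernel

section Dispersion

variable {d : ℕ} {l1 l2 : ℝ}

lemma omg_pos (hl1 : 0 < l1) (hl2 : 0 ≤ l2) (k : Sp d) : 0 < omg l1 l2 k := by
  unfold omg; positivity

lemma sqrt_le_omg (hl2 : 0 ≤ l2) (k : Sp d) : √l1 ≤ omg l1 l2 k :=
  Real.sqrt_le_sqrt (le_add_of_nonneg_right (by positivity))

lemma sqrt_mul_norm_le_omg (hl1 : 0 ≤ l1) (hl2 : 0 ≤ l2) (k : Sp d) :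
    √l2 * ‖k‖ ≤ omg l1 l2 k := by
  apply Real.le_sqrt_of_sq_le
  rw [mul_pow, Real.sq_sqrt hl2]
  exact le_add_of_nonneg_left hl1

lemma omg_le_mul (hl1 : 0 < l1) (hl2 : 0 ≤ l2) {k p q : Sp d} (h : ‖k‖ ≤ ‖p‖ + ‖q‖) :
    omg l1 l2 k ≤ √(2 / l1) * (omg l1 l2 p * omg l1 l2 q) := by
  have hk : ‖k‖ ^ 2 ≤ 2 * (‖p‖ ^ 2 + ‖q‖ ^ 2) :=
    (pow_le_pow_left₀ (norm_nonneg k) h 2).trans add_sq_le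
  unfold omg
  rw [← Real.sqrt_mul (by positivity), ← Real.sqrt_mul (by positivity)]
  apply Real.sqrt_le_sqrt
  calc l1 + l2 * ‖k‖ ^ 2 ≤ l1 + l2 * (2 * (‖p‖ ^ 2 + ‖q‖ ^ 2)) := by gcongr
    _ ≤ l1 + l2 * (2 * (‖p‖ ^ 2 + ‖q‖ ^ 2)) + (l1 + 2 / l1 * (l2 * ‖p‖ ^ 2) * (l2 * ‖q‖ ^ 2)) :=
      le_add_of_nonneg_right (by positivity)
    _ = 2 / l1 * ((l1 + l2 * ‖p‖ ^ 2) * (l1 + l2 * ‖q‖ ^ 2)) := by field_simp; ring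

@[fun_prop]
lemma measurable_omg : Measurable (fun k : Sp d => omg l1 l2 k) := by
  unfold omg; fun_prop

lemma omg_rpow_sub_le (hl1 : 0 < l1) (hl2 : 0 ≤ l2) {s t : ℝ} (hst : s ≤ t) (k : Sp d) :
    omg l1 l2 k ^ (s - t) ≤ √l1 ^ (s - t) :=
  Real.rpow_le_rpow_of_nonpos (Real.sqrt_pos.mpr hl1) (sqrt_le_omg hl2 k) (sub_nonpos.mpr hst)

lemma L1Bounded.omg_rpow_mono (hl1 : 0 < l1) (hl2 : 0 ≤ l2) {s t C : ℝ} (hst : s ≤ t)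
    {f : Sp d → ℝ} (hf : L1Bounded (fun k => f k * omg l1 l2 k ^ t) volume C) :
    L1Bounded (fun k => f k * omg l1 l2 k ^ s) volume (√l1 ^ (s - t) * C) := by
  have hω (k : Sp d) : 0 < omg l1 l2 k := omg_pos hl1 hl2 k
  have hmeas : Measurable fun k : Sp d => omg l1 l2 k ^ (s - t) := by fun_prop
  refine (hf.bdd_mul hmeas.aestronglyMeasurable (by positivity) fun k => ?_).congr
    (ae_of_all _ fun k => ?_)
  · rw [abs_of_pos (Real.rpow_pos_of_pos (hω k) _)]
    exact omg_rpow_sub_le hl1 hl2 hst k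
  · simp only [Real.rpow_sub (hω k)]
    have := (Real.rpow_pos_of_pos (hω k) t).ne'
    field_simp

lemma abs_M0_le {s C : ℝ} (hl1 : 0 < l1) (hl2 : 0 ≤ l2) (hs : 0 ≤ s) {f : Sp d → ℝ}
    (hf : L1Bounded (fun k => f k * omg l1 l2 k ^ s) volume C) : |M0 f| ≤ √l1 ^ (-s) * C := by
  have h := hf.omg_rpow_mono hl1 hl2 hs
  simp only [Real.rpow_zero, mul_one, zero_sub] at h
  exact abs_integral_le_integral_abs.trans h.integral_abs_le

lemma integrable_of_omg_rpow {s : ℝ} (hl1 : 0 < l1) (hl2 : 0 ≤ l2) (hs : 0 ≤ s) {f : Sp d → ℝ}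
    (hf : Integrable fun k => f k * omg l1 l2 k ^ s) : Integrable f := by
  simpa using (L1Bounded.omg_rpow_mono hl1 hl2 hs ⟨hf, le_rfl⟩).integrable

lemma abs_M0_sub_le {s R : ℝ} (hl1 : 0 < l1) (hl2 : 0 ≤ l2) (hs : 0 ≤ s) {g h : Sp d → ℝ}
    (hg : Integrable fun k => g k * omg l1 l2 k ^ s)
    (hh : Integrable fun k => h k * omg l1 l2 k ^ s)
    (hgh : L1Bounded (fun k => (g k - h k) * omg l1 l2 k ^ s) volume R) :
    |M0 g - M0 h| ≤ √l1 ^ (-s) * R := by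
  rw [M0, M0, ← integral_sub (integrable_of_omg_rpow hl1 hl2 hs hg)
    (integrable_of_omg_rpow hl1 hl2 hs hh)]
  exact abs_M0_le hl1 hl2 hs hgh

lemma wnorm_eq_integral_abs (hl1 : 0 < l1) (hl2 : 0 ≤ l2) (s : ℝ) (f : Sp d → ℝ) :
    wnorm l1 l2 s f = ∫ k, |f k * omg l1 l2 k ^ s| := by
  simp only [wnorm, abs_mul, abs_of_pos (Real.rpow_pos_of_pos (omg_pos hl1 hl2 _) s)]

lemma l1Bounded_of_wnorm_le {s t M : ℝ} (hl1 : 0 < l1) (hl2 : 0 ≤ l2)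
    (hst : s ≤ t) {f : Sp d → ℝ} (hf0 : ∀ k, 0 ≤ f k)
    (hf : Integrable fun k => |f k| * omg l1 l2 k ^ t) (hM : wnorm l1 l2 t f ≤ M) :
    L1Bounded (fun k => f k * omg l1 l2 k ^ s) volume (√l1 ^ (s - t) * M) := by
  refine L1Bounded.omg_rpow_mono hl1 hl2 hst ⟨?_, ?_⟩
  · simpa only [abs_of_nonneg (hf0 _)] using hf
  · rwa [← wnorm_eq_integral_abs hl1 hl2]

lemma integral_abs_le_abs_M0 {f : Sp d → ℝ} (hf0 : ∀ k, 0 ≤ f k) :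
    ∫ k, |f k| ≤ |M0 f| := by
  simp only [abs_of_nonneg (hf0 _)]
  exact le_abs_self (M0 f)

end Dispersion

section Pairing

variable {E : Type*} [NormedAddCommGroup E] [MeasureSpace E]

/-- An admissible change of variables `(k, x) ↦ (p, q)` for the pairs of wave numbers at which the
collision integrands evaluate a product of densities: it preserves Lebesgue measure, and the outer
variable `k` obeys `|k| ≤ |p| + |q|`. -/
structure IsPairing (T : E × E → E × E) : Prop where
  measurePreserving : MeasurePreserving T
  norm_fst_le : ∀ y, ‖y.1‖ ≤ ‖(T y).1‖ + ‖(T y).2‖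

namespace IsPairing

lemma id : IsPairing fun y : E × E => (y.1, y.2) where
  measurePreserving := MeasurePreserving.id _
  norm_fst_le _ := le_add_of_nonneg_right (norm_nonneg _)

variable [BorelSpace E] [SecondCountableTopology E] [SFinite (volume : Measure E)]
  [(volume : Measure E).IsAddLeftInvariant]

lemma fst_add : IsPairing fun y : E × E => (y.1, y.1 + y.2) where
  measurePreserving := measurePreserving_prod_add volume volume
  norm_fst_le _ := le_add_of_nonneg_right (norm_nonneg _)

lemma add_snd : IsPairing fun y : E × E => (y.1 + y.2, y.2) where
  measurePreserving := measurePreserving_add_prod volume volume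
  norm_fst_le y := by simpa using norm_sub_le (y.1 + y.2) y.2

lemma snd_sub : IsPairing fun y : E × E => (y.2, y.1 - y.2) where
  measurePreserving := measurePreserving_prod_sub_swap volume volume
  norm_fst_le y := by simpa using norm_add_le y.2 (y.1 - y.2)

lemma fst_sub [(volume : Measure E).IsNegInvariant] :
    IsPairing fun y : E × E => (y.1, y.1 - y.2) where
  measurePreserving := by
    simpa only [Function.comp_def, Prod.map, _root_.id, sub_eq_add_neg,
      Measure.volume_eq_prod] using
      (measurePreserving_prod_add volume volume).comp
        ((MeasurePreserving.id (volume : Measure E)).prod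
          (Measure.measurePreserving_neg (volume : Measure E)))
  norm_fst_le _ := le_add_of_nonneg_right (norm_nonneg _)

end IsPairing

end Pairing

section CollisionIntegral

variable {d : ℕ} {l1 l2 N : ℝ}

/-- The constant in `|k| ω_k^N ≤ c ω_p^(N+1) ω_q^(N+1)` for `|k| ≤ |p| + |q|`. -/
def pairingConst (l1 l2 N : ℝ) : ℝ := √(2 / l1) ^ (N + 1) / √l2

lemma pairingConst_pos (hl1 : 0 < l1) (hl2 : 0 < l2) : 0 < pairingConst l1 l2 N := by
  unfold pairingConst; positivity

lemma norm_mul_omg_rpow_le (hl1 : 0 < l1) (hl2 : 0 < l2) (hN : -1 ≤ N) {k p q : Sp d}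
    (h : ‖k‖ ≤ ‖p‖ + ‖q‖) : ‖k‖ * omg l1 l2 k ^ N ≤
      pairingConst l1 l2 N * (omg l1 l2 p ^ (N + 1) * omg l1 l2 q ^ (N + 1)) := by
  have hω (k : Sp d) : 0 < omg l1 l2 k := omg_pos hl1 hl2.le k
  have hk := hω k
  calc ‖k‖ * omg l1 l2 k ^ N ≤ omg l1 l2 k / √l2 * omg l1 l2 k ^ N := by
        gcongr
        rw [le_div_iff₀' (by positivity)]
        exact sqrt_mul_norm_le_omg hl1.le hl2.le k
    _ = omg l1 l2 k ^ (N + 1) / √l2 := by rw [Real.rpow_add_one hk.ne']; ring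
    _ ≤ (√(2 / l1) * (omg l1 l2 p * omg l1 l2 q)) ^ (N + 1) / √l2 := by
        gcongr
        · linarith
        · exact omg_le_mul hl1 hl2.le h
    _ = pairingConst l1 l2 N * (omg l1 l2 p ^ (N + 1) * omg l1 l2 q ^ (N + 1)) := by
        rw [Real.mul_rpow (by positivity) (mul_nonneg (hω p).le (hω q).le),
          Real.mul_rpow (hω p).le (hω q).le, pairingConst]
        ring

-- Dividing by the weights at `T y = (p, q)` turns the kernel into a bounded multiplier of the
-- integrable function `(u ω^(N+1)) ⊗ (v ω^(N+1))`.
lemma l1Bounded_kernel_mul_tensorProd (hl1 : 0 < l1) (hl2 : 0 < l2) (hN : -1 ≤ N)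
    {T : Sp d × Sp d → Sp d × Sp d} (hT : IsPairing T) {K : Sp d × Sp d → ℝ} {a A B : ℝ}
    (hK : Measurable K) (ha : 0 ≤ a) (hKa : ∀ y, |K y| ≤ a * ‖y.1‖) {u v : Sp d → ℝ}
    (hu : L1Bounded (fun k => u k * omg l1 l2 k ^ (N + 1)) volume A)
    (hv : L1Bounded (fun k => v k * omg l1 l2 k ^ (N + 1)) volume B) :
    L1Bounded (fun y => K y * tensorProd u v (T y) * omg l1 l2 y.1 ^ N) volume
      (a * pairingConst l1 l2 N * (A * B)) := by
  have hω (s : ℝ) (k : Sp d) : 0 < omg l1 l2 k ^ s := Real.rpow_pos_of_pos (omg_pos hl1 hl2.le k) s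
  set W : Sp d × Sp d → ℝ := fun p => omg l1 l2 p.1 ^ (N + 1) * omg l1 l2 p.2 ^ (N + 1)
  have hW (p : Sp d × Sp d) : 0 < W p := mul_pos (hω _ _) (hω _ _)
  have hTmeas := hT.measurePreserving.measurable
  have hmeas : Measurable fun y => K y * omg l1 l2 y.1 ^ N / W (T y) := by fun_prop
  have hbound (y : Sp d × Sp d) :
      |K y * omg l1 l2 y.1 ^ N / W (T y)| ≤ a * pairingConst l1 l2 N := by
    rw [abs_div, abs_mul, abs_of_pos (hω N _), abs_of_pos (hW _), div_le_iff₀ (hW _)]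
    calc |K y| * omg l1 l2 y.1 ^ N ≤ a * ‖y.1‖ * omg l1 l2 y.1 ^ N :=
          mul_le_mul_of_nonneg_right (hKa y) (hω N _).le
      _ = a * (‖y.1‖ * omg l1 l2 y.1 ^ N) := by ring
      _ ≤ a * (pairingConst l1 l2 N * W (T y)) :=
          mul_le_mul_of_nonneg_left (norm_mul_omg_rpow_le hl1 hl2 hN (hT.norm_fst_le y)) ha
      _ = a * pairingConst l1 l2 N * W (T y) := by ring
  refine (((hu.tensorProd hv).comp hT.measurePreserving).bdd_mul hmeas.aestronglyMeasurable
    (mul_nonneg ha (pairingConst_pos hl1 hl2).le) hbound).congr (ae_of_all _ fun y => ?_)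
  have h₁ := (hω (N + 1) (T y).1).ne'
  have h₂ := (hω (N + 1) (T y).2).ne'
  simp only [tensorProd, W]
  field_simp

lemma l1Bounded_kernel_mul_tensorProd_sub (hl1 : 0 < l1) (hl2 : 0 < l2) (hN : -1 ≤ N)
    {T : Sp d × Sp d → Sp d × Sp d} (hT : IsPairing T) {Kg Kh : Sp d × Sp d → ℝ} {a b M R : ℝ}
    (hKg : Measurable Kg) (hKh : Measurable Kh) (ha : 0 ≤ a) (hb : 0 ≤ b)
    (hKga : ∀ y, |Kg y| ≤ a * ‖y.1‖) (hKb : ∀ y, |Kg y - Kh y| ≤ b * ‖y.1‖) {g h : Sp d → ℝ}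
    (hg : L1Bounded (fun k => g k * omg l1 l2 k ^ (N + 1)) volume M)
    (hh : L1Bounded (fun k => h k * omg l1 l2 k ^ (N + 1)) volume M)
    (hgh : L1Bounded (fun k => (g k - h k) * omg l1 l2 k ^ (N + 1)) volume R) :
    L1Bounded
      (fun y => (Kg y * tensorProd g g (T y) - Kh y * tensorProd h h (T y)) * omg l1 l2 y.1 ^ N)
      volume (pairingConst l1 l2 N * (2 * a * M * R + b * M ^ 2)) := by
  have h₁ := l1Bounded_kernel_mul_tensorProd hl1 hl2 hN hT hKg ha hKga hgh hg
  have h₂ := l1Bounded_kernel_mul_tensorProd hl1 hl2 hN hT hKg ha hKga hh hgh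
  have h₃ := l1Bounded_kernel_mul_tensorProd hl1 hl2 hN hT (hKg.sub hKh) hb hKb hh hh
  refine (((h₁.add h₂).add h₃).congr (ae_of_all _ fun y => ?_)).mono (le_of_eq (by ring))
  simp only [tensorProd, Pi.sub_apply]
  ring

/-- The combination `f_p f_q - f_p' f_q' - f_p'' f_q''` of densities in a collision integrand, the
three pairs of wave numbers being `T₁ y`, `T₂ y` and `T₃ y`. -/
def triadBalance (f : Sp d → ℝ) (T₁ T₂ T₃ : Sp d × Sp d → Sp d × Sp d) (y : Sp d × Sp d) : ℝ :=
  tensorProd f f (T₁ y) - tensorProd f f (T₂ y) - tensorProd f f (T₃ y)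

variable {T₁ T₂ T₃ : Sp d × Sp d → Sp d × Sp d}

lemma integrable_kernel_mul_triadBalance (hl1 : 0 < l1) (hl2 : 0 < l2) (hN : -1 ≤ N)
    (hT₁ : IsPairing T₁) (hT₂ : IsPairing T₂) (hT₃ : IsPairing T₃)
    {K : Sp d × Sp d → ℝ} {a : ℝ} (hK : Measurable K) (ha : 0 ≤ a)
    (hKa : ∀ y, |K y| ≤ a * ‖y.1‖) {f : Sp d → ℝ}
    (hf : Integrable fun k => f k * omg l1 l2 k ^ (N + 1)) :
    Integrable fun y => K y * triadBalance f T₁ T₂ T₃ y * omg l1 l2 y.1 ^ N := by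
  have term {T : Sp d × Sp d → Sp d × Sp d} (hT : IsPairing T) :
      Integrable fun y => K y * tensorProd f f (T y) * omg l1 l2 y.1 ^ N :=
    (l1Bounded_kernel_mul_tensorProd hl1 hl2 hN hT hK ha hKa ⟨hf, le_rfl⟩ ⟨hf, le_rfl⟩).integrable
  refine (((term hT₁).sub (term hT₂)).sub (term hT₃)).congr (ae_of_all _ fun y => ?_)
  simp only [triadBalance, Pi.sub_apply]
  ring

lemma l1Bounded_collisionIntegral_sub (hl1 : 0 < l1) (hl2 : 0 < l2) (hN : -1 ≤ N)
    (hT₁ : IsPairing T₁) (hT₂ : IsPairing T₂) (hT₃ : IsPairing T₃)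
    {Kg Kh : Sp d × Sp d → ℝ} {a b M R : ℝ} (hKg : Measurable Kg) (hKh : Measurable Kh)
    (ha : 0 ≤ a) (hb : 0 ≤ b) (hKga : ∀ y, |Kg y| ≤ a * ‖y.1‖) (hKha : ∀ y, |Kh y| ≤ a * ‖y.1‖)
    (hKb : ∀ y, |Kg y - Kh y| ≤ b * ‖y.1‖) {g h : Sp d → ℝ}
    (hg : L1Bounded (fun k => g k * omg l1 l2 k ^ (N + 1)) volume M)
    (hh : L1Bounded (fun k => h k * omg l1 l2 k ^ (N + 1)) volume M)
    (hgh : L1Bounded (fun k => (g k - h k) * omg l1 l2 k ^ (N + 1)) volume R) :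
    L1Bounded
      (fun k => ((∫ x, Kg (k, x) * triadBalance g T₁ T₂ T₃ (k, x)) -
        ∫ x, Kh (k, x) * triadBalance h T₁ T₂ T₃ (k, x)) * omg l1 l2 k ^ N)
      volume (3 * (pairingConst l1 l2 N * (2 * a * M * R + b * M ^ 2))) := by
  refine L1Bounded.integral_sub_mul (w := fun k => omg l1 l2 k ^ N)
    (fun k => (Real.rpow_pos_of_pos (omg_pos hl1 hl2.le k) N).ne')
    (integrable_kernel_mul_triadBalance hl1 hl2 hN hT₁ hT₂ hT₃ hKg ha hKga hg.integrable)
    (integrable_kernel_mul_triadBalance hl1 hl2 hN hT₁ hT₂ hT₃ hKh ha hKha hh.integrable) ?_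
  have term {T : Sp d × Sp d → Sp d × Sp d} (hT : IsPairing T) :=
    l1Bounded_kernel_mul_tensorProd_sub hl1 hl2 hN hT hKg hKh ha hb hKga hKb hg hh hgh
  refine ((((term hT₁).sub (term hT₂)).sub (term hT₃)).congr
    (ae_of_all _ fun y => ?_)).mono (le_of_eq (by ring))
  simp only [triadBalance]
  ring

end CollisionIntegral

section CollisionOperator

variable {d : ℕ} {l1 l2 N m M R : ℝ} {g h : Sp d → ℝ}

/-- The first integral of the collision operator, over the triads `k = k1 + (k - k1)`. -/
def splittingIntegral (l1 l2 : ℝ) (f : Sp d → ℝ) (k : Sp d) : ℝ :=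
  ∫ x, triadKernel f (omg l1 l2 k - omg l1 l2 x - omg l1 l2 (k - x)) k x (k - x) *
    triadBalance f (fun y => (y.2, y.1 - y.2)) (fun y => (y.1, y.2))
      (fun y => (y.1, y.1 - y.2)) (k, x)

/-- The second integral of the collision operator, over the triads in which `k` and `k2` merge
into `k + k2`. -/
def mergingIntegral (l1 l2 : ℝ) (f : Sp d → ℝ) (k : Sp d) : ℝ :=
  ∫ x, triadKernel f (omg l1 l2 (k + x) - omg l1 l2 k - omg l1 l2 x) (k + x) k x *
    triadBalance f (fun y => (y.1, y.2)) (fun y => (y.1, y.1 + y.2))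
      (fun y => (y.1 + y.2, y.2)) (k, x)

lemma Qop_eq_splittingIntegral_sub (l1 l2 : ℝ) (f : Sp d → ℝ) (k : Sp d) :
    Qop l1 l2 f k = splittingIntegral l1 l2 f k - 2 * mergingIntegral l1 l2 f k := rfl

lemma l1Bounded_splittingIntegral_sub (hl1 : 0 < l1) (hl2 : 0 < l2) (hN : -1 ≤ N)
    (hm : 0 < m) (hg0 : m ≤ |M0 g|) (hh0 : m ≤ |M0 h|)
    (hg : L1Bounded (fun k => g k * omg l1 l2 k ^ (N + 1)) volume M)
    (hh : L1Bounded (fun k => h k * omg l1 l2 k ^ (N + 1)) volume M)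
    (hgh : L1Bounded (fun k => (g k - h k) * omg l1 l2 k ^ (N + 1)) volume R) :
    L1Bounded
      (fun k => (splittingIntegral l1 l2 g k - splittingIntegral l1 l2 h k) * omg l1 l2 k ^ N)
      volume (3 * (pairingConst l1 l2 N *
        (2 * m⁻¹ * M * R + |M0 g - M0 h| / m ^ 2 * M ^ 2))) := by
  let K (f : Sp d → ℝ) (y : Sp d × Sp d) : ℝ :=
    triadKernel f (omg l1 l2 y.1 - omg l1 l2 y.2 - omg l1 l2 (y.1 - y.2)) y.1 y.2 (y.1 - y.2)
  have hK (f : Sp d → ℝ) : Measurable (K f) := by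
    unfold K triadKernel Vsq Lor Gam; fun_prop
  exact l1Bounded_collisionIntegral_sub hl1 hl2 hN .snd_sub .id .fst_sub (hK g) (hK h)
    (by positivity) (by positivity) (fun _ => abs_triadKernel_le hm hg0 _ _ _ _)
    (fun _ => abs_triadKernel_le hm hh0 _ _ _ _)
    (fun _ => abs_triadKernel_sub_le hm hg0 hh0 _ _ _ _) hg hh hgh

lemma l1Bounded_mergingIntegral_sub (hl1 : 0 < l1) (hl2 : 0 < l2) (hN : -1 ≤ N)
    (hm : 0 < m) (hg0 : m ≤ |M0 g|) (hh0 : m ≤ |M0 h|)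
    (hg : L1Bounded (fun k => g k * omg l1 l2 k ^ (N + 1)) volume M)
    (hh : L1Bounded (fun k => h k * omg l1 l2 k ^ (N + 1)) volume M)
    (hgh : L1Bounded (fun k => (g k - h k) * omg l1 l2 k ^ (N + 1)) volume R) :
    L1Bounded
      (fun k => (mergingIntegral l1 l2 g k - mergingIntegral l1 l2 h k) * omg l1 l2 k ^ N)
      volume (3 * (pairingConst l1 l2 N *
        (2 * m⁻¹ * M * R + |M0 g - M0 h| / m ^ 2 * M ^ 2))) := by
  let K (f : Sp d → ℝ) (y : Sp d × Sp d) : ℝ :=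
    triadKernel f (omg l1 l2 (y.1 + y.2) - omg l1 l2 y.1 - omg l1 l2 y.2) y.1 (y.1 + y.2) y.2
  have hK (f : Sp d → ℝ) : Measurable (K f) := by
    unfold K triadKernel Vsq Lor Gam; fun_prop
  simp only [mergingIntegral, triadKernel_swap _ _ (_ + _)]
  exact l1Bounded_collisionIntegral_sub hl1 hl2 hN .id .fst_add .add_snd (hK g) (hK h)
    (by positivity) (by positivity) (fun _ => abs_triadKernel_le hm hg0 _ _ _ _)
    (fun _ => abs_triadKernel_le hm hh0 _ _ _ _)
    (fun _ => abs_triadKernel_sub_le hm hg0 hh0 _ _ _ _) hg hh hgh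

lemma l1Bounded_Qop_sub (hl1 : 0 < l1) (hl2 : 0 < l2) (hN : -1 ≤ N)
    (hm : 0 < m) (hg0 : m ≤ |M0 g|) (hh0 : m ≤ |M0 h|)
    (hg : L1Bounded (fun k => g k * omg l1 l2 k ^ (N + 1)) volume M)
    (hh : L1Bounded (fun k => h k * omg l1 l2 k ^ (N + 1)) volume M)
    (hgh : L1Bounded (fun k => (g k - h k) * omg l1 l2 k ^ (N + 1)) volume R) :
    L1Bounded (fun k => (Qop l1 l2 g k - Qop l1 l2 h k) * omg l1 l2 k ^ N) volume
      (9 * pairingConst l1 l2 N * (2 * M / m + √l1 ^ (-(N + 1)) * M ^ 2 / m ^ 2) * R) := by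
  have hsplit := l1Bounded_splittingIntegral_sub hl1 hl2 hN hm hg0 hh0 hg hh hgh
  have hmerge := l1Bounded_mergingIntegral_sub hl1 hl2 hN hm hg0 hh0 hg hh hgh
  have hM0 : |M0 g - M0 h| ≤ √l1 ^ (-(N + 1)) * R :=
    abs_M0_sub_le hl1 hl2.le (by linarith) hg.integrable hh.integrable hgh
  have hc := pairingConst_pos (N := N) hl1 hl2
  refine ((hsplit.sub (hmerge.const_mul 2)).congr (ae_of_all _ fun k => ?_)).mono ?_
  · simp only [Qop_eq_splittingIntegral_sub]
    ring
  · calc _ = 9 * pairingConst l1 l2 N *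
          (2 * m⁻¹ * M * R + |M0 g - M0 h| / m ^ 2 * M ^ 2) := by rw [abs_two]; ring
      _ ≤ 9 * pairingConst l1 l2 N *
          (2 * m⁻¹ * M * R + √l1 ^ (-(N + 1)) * R / m ^ 2 * M ^ 2) := by gcongr
      _ = _ := by ring

end CollisionOperator

theorem collision_lipschitz_higher_moment_general {d : ℕ} (l1 l2 M M' N : ℝ)
    (hl1 : 0 < l1) (hl2 : 0 < l2) (hM : 0 < M) (hM' : 0 < M') (hN : -1 ≤ N) :
    ∃ C > (0 : ℝ), ∀ g h : Sp d → ℝ,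
      L1Bounded (fun k => g k * omg l1 l2 k ^ (N + 1)) volume M →
      L1Bounded (fun k => h k * omg l1 l2 k ^ (N + 1)) volume M →
      M' ≤ |M0 g| → M' ≤ |M0 h| →
      L1Bounded (fun k => (Qop l1 l2 g k - Qop l1 l2 h k) * omg l1 l2 k ^ N) volume
        (C * wnorm l1 l2 (N + 1) (fun k => g k - h k)) := by
  have hc := pairingConst_pos (N := N) hl1 hl2
  refine ⟨9 * pairingConst l1 l2 N * (2 * M / M' + √l1 ^ (-(N + 1)) * M ^ 2 / M' ^ 2),
    by positivity, fun g h hg hh hg0 hh0 => ?_⟩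
  refine l1Bounded_Qop_sub hl1 hl2 hN hM' hg0 hh0 hg hh
    ⟨?_, (wnorm_eq_integral_abs hl1 hl2.le _ _).ge⟩
  simp only [sub_mul]
  exact hg.integrable.sub hh.integrable

/-- Lipschitz estimate in a higher-moment norm: for M, M' > 0 and N ≥ 0,
there is C_{M,M'} > 0 such that for all nonnegative g, h ∈ L¹ ∩ L¹_{N+2} with L¹_{N+2}
norms ≤ M and L¹ norms ≥ M', ‖Q[g] − Q[h]‖_{L¹_N} ≤ C·‖g − h‖_{L¹_{N+1}}. -/
theorem collision_lipschitz_higher_moment {d : ℕ} (hd : 2 ≤ d) (l1 l2 M M' N : ℝ)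
    (hl1 : 0 < l1) (hl2 : 0 < l2) (hM : 0 < M) (hM' : 0 < M') (hN : 0 ≤ N) :
    ∃ C > (0 : ℝ), ∀ g h : Sp d → ℝ,
      (∀ k, 0 ≤ g k) → (∀ k, 0 ≤ h k) →
      Integrable g → Integrable h →
      Integrable (fun k => |g k| * omg l1 l2 k ^ (N + 2)) →
      Integrable (fun k => |h k| * omg l1 l2 k ^ (N + 2)) →
      wnorm l1 l2 (N + 2) g ≤ M → wnorm l1 l2 (N + 2) h ≤ M →
      M' ≤ ∫ k, |g k| → M' ≤ ∫ k, |h k| →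
      wnorm l1 l2 N (fun k => Qop l1 l2 g k - Qop l1 l2 h k) ≤
        C * wnorm l1 l2 (N + 1) (fun k => g k - h k) := by
  obtain ⟨C, hC, hQ⟩ := collision_lipschitz_higher_moment_general (d := d) l1 l2
    (√l1 ^ (N + 1 - (N + 2)) * M) M' N hl1 hl2 (by positivity) hM' (by linarith)
  refine ⟨C, hC, fun g h hg0 hh0 _ _ hg hh hgM hhM hgM' hhM' => ?_⟩
  rw [wnorm_eq_integral_abs hl1 hl2.le]
  exact (hQ g h (l1Bounded_of_wnorm_le hl1 hl2.le (by linarith) hg0 hg hgM)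
    (l1Bounded_of_wnorm_le hl1 hl2.le (by linarith) hh0 hh hhM)
    (hgM'.trans (integral_abs_le_abs_M0 hg0))
    (hhM'.trans (integral_abs_le_abs_M0 hh0))).integral_abs_le
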